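/- arXiv:2111.07360 — 3 statements merged into one kernel-verified Lean document; each statement's English description precedes it below -/
import Mathlib

section
/- Let V be a type, w : V → V → ℝ≥0∞ a weight function, T ⊆ V a set of vertices, s ∈ T, and δ : V → ℝ≥0∞ a function with δ(s) = 0 and δ(u) ≥ d_w(s,u) for every u ∈ T. Let w' be the contraction of T onto s. Then for all vertices r, v ∈ (V ∖ T) ∪ {s}, the contracted distance is at least the original distance: d_{w'}(r,v) ≥ d_w(r,v). (This is the 'distances have not decreased' direction of Corollary 4.4 of the paper.) -/
/-!
The distance `wDist w` is the largest function that vanishes on the diagonal, satisfies the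
triangle inequality and lies below `w`. Hence, if every edge weight `w' x y` is at least
`wDist w x y`, summing along a walk gives `wDist w ≤ wDist w'` (`wDist_le_wDist`).

Every edge of the contraction has this property: the only edges with a new finite weight
leave `s`, and for each `u ∈ T`, `wDist w s y ≤ wDist w s u + w u y ≤ δ u + w u y`.
-/

open scoped ENNReal

/-- A walk from `u` to `v`: a nonempty list with head `u` and last element `v`. -/
def IsWalk {V : Type*} (p : List V) (u v : V) : Prop :=
  p ≠ [] ∧ p.head? = some u ∧ p.getLast? = some v

/-- The weight of a walk: the sum of `w x y` over consecutive pairs of the list. -/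
noncomputable def walkWeight {V : Type*} (w : V → V → ℝ≥0∞) (p : List V) : ℝ≥0∞ :=
  ((p.zip p.tail).map fun e => w e.1 e.2).sum

/-- The distance from `u` to `v`: the infimum of the weights of walks from `u` to `v`. -/
noncomputable def wDist {V : Type*} (w : V → V → ℝ≥0∞) (u v : V) : ℝ≥0∞ :=
  ⨅ (p : List V) (_ : IsWalk p u v), walkWeight w p

/- `contractW w T s δ` is the contraction of `T` onto `s ∈ T`, with offsets `δ`. -/
open Classical in
noncomputable def contractW {V : Type*} (w : V → V → ℝ≥0∞) (T : Set V) (s : V)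
    (δ : V → ℝ≥0∞) : V → V → ℝ≥0∞ := fun x y =>
  if x ∈ T \ {s} ∨ y ∈ T \ {s} ∨ (x = s ∧ y = s) then ∞
  else if x = s then ⨅ u ∈ T, (δ u + w u y)
  else w x y

theorem wDist_le_walkWeight {V : Type*} (w : V → V → ℝ≥0∞) {p : List V} {u v : V}
    (h : IsWalk p u v) : wDist w u v ≤ walkWeight w p :=
  iInf₂_le p h

theorem walkWeight_cons_cons {V : Type*} (w : V → V → ℝ≥0∞) (x y : V) (l : List V) :
    walkWeight w (x :: y :: l) = w x y + walkWeight w (y :: l) := by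
  simp [walkWeight]

theorem wDist_self {V : Type*} (w : V → V → ℝ≥0∞) (u : V) : wDist w u u = 0 := by
  have h := wDist_le_walkWeight w (p := [u]) (u := u) (v := u) (by simp [IsWalk])
  simpa [walkWeight] using h

theorem wDist_le_weight {V : Type*} (w : V → V → ℝ≥0∞) (u v : V) : wDist w u v ≤ w u v := by
  have h := wDist_le_walkWeight w (p := [u, v]) (u := u) (v := v) (by simp [IsWalk])
  simpa [walkWeight] using h

/-- Appending to a walk ending at `b` the tail of a walk starting at `b` adds the weights;
`b` is counted once. -/
theorem walkWeight_append {V : Type*} (w : V → V → ℝ≥0∞) (b : V) (q : List V) :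
    ∀ p : List V, p.getLast? = some b →
      walkWeight w (p ++ q) = walkWeight w p + walkWeight w (b :: q)
  | [], h => by simp at h
  | [x], h => by
    obtain rfl : x = b := by simpa using h
    simp [walkWeight]
  | x :: y :: l, h => by
    have ih := walkWeight_append w b q (y :: l) (by simpa using h)
    simp only [List.cons_append] at ih ⊢
    rw [walkWeight_cons_cons, walkWeight_cons_cons, ih, add_assoc]

theorem wDist_triangle {V : Type*} (w : V → V → ℝ≥0∞) (a b c : V) :
    wDist w a c ≤ wDist w a b + wDist w b c := by
  conv_rhs => unfold wDist
  refine ENNReal.le_iInf₂_add_iInf₂ fun p hp q hq => ?_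
  obtain ⟨hp0, hpa, hpb⟩ := hp
  obtain ⟨hq0, hqb, hqc⟩ := hq
  cases q with
  | nil => exact absurd rfl hq0
  | cons y l =>
    obtain rfl : y = b := by simpa using hqb
    rw [← walkWeight_append w y l p hpb]
    refine wDist_le_walkWeight w ⟨by simp [hp0], by simp [List.head?_append, hpa], ?_⟩
    cases l with
    | nil => simpa [hpb] using hqc
    | cons z l => simpa [List.getLast?_append] using hqc

/-- If the weights `w'` dominate the distances of `w`, then so do the distances of `w'`. -/
theorem wDist_le_wDist {V : Type*} (w w' : V → V → ℝ≥0∞)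
    (h : ∀ x y, wDist w x y ≤ w' x y) (u v : V) : wDist w u v ≤ wDist w' u v := by
  refine le_iInf₂ fun p hp => ?_
  induction p generalizing u with
  | nil => exact absurd rfl hp.1
  | cons x l ih =>
    obtain ⟨-, hu, hv⟩ := hp
    obtain rfl : x = u := by simpa using hu
    cases l with
    | nil =>
      obtain rfl : x = v := by simpa using hv
      simp [wDist_self]
    | cons y l =>
      rw [walkWeight_cons_cons]
      exact (wDist_triangle w x y v).trans
        (add_le_add (h x y) (ih y ⟨by simp, rfl, by simpa using hv⟩))

theorem wDist_le_contractW {V : Type*} (w : V → V → ℝ≥0∞) (T : Set V) (s : V)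
    (δ : V → ℝ≥0∞) (hδ : ∀ u ∈ T, wDist w s u ≤ δ u) (x y : V) :
    wDist w x y ≤ contractW w T s δ x y := by
  unfold contractW
  split_ifs with h1 h2
  · exact le_top
  · subst h2
    exact le_iInf₂ fun u hu => (wDist_triangle w x u y).trans
      (add_le_add (hδ u hu) (wDist_le_weight w u y))
  · exact wDist_le_weight w x y

/-- Contracting a tree `T` onto its root `s` (with `δ` dominating the distances
from `s` inside `T`) does not decrease distances between vertices surviving the
contraction. -/
theorem contraction_not_decrease_dist {V : Type*} (w : V → V → ℝ≥0∞)
    (T : Set V) (s : V) (hs : s ∈ T) (δ : V → ℝ≥0∞)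
    (hδs : δ s = 0) (hδ : ∀ u ∈ T, wDist w s u ≤ δ u)
    (r v : V) (hr : r ∈ Tᶜ ∪ {s}) (hv : v ∈ Tᶜ ∪ {s}) :
    wDist w r v ≤ wDist (contractW w T s δ) r v := by
  exact wDist_le_wDist w _ (wDist_le_contractW w T s δ hδ) r v
end

section
/- Let m ≥ 1 be a natural number and let S_h be the set of subproblem intervals at recursion level h of the midpoint divide-and-conquer on [0,m]. Then for any natural numbers a ≤ b with b ≤ m and any level h, the number of intervals (i₁,i₂) ∈ S_h that partially intersect [a,b] — i.e. [i₁,i₂] ∩ [a,b] ≠ ∅ but not (a ≤ i₁ and i₂ ≤ b) — is at most 2. (This is the claim, used in the preprocessing-time analysis, that on each recursion level only O(1) subproblem intervals partially intersect a fixed interval.) -/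
/-!
Every level of the recursion consists of nondegenerate intervals with pairwise disjoint
interiors, since splitting at the midpoint preserves this property. An interval `(i₁, i₂)` which
meets `[a, b]` without being contained in it satisfies `i₁ < a ≤ i₂` or `i₁ ≤ b < i₂`. The
half-open intervals `(i₁, i₂]` of a level are pairwise disjoint, so at most one of them contains
`a`; likewise at most one of the `[i₁, i₂)` contains `b`. This gives the bound `1 + 1 = 2`.
-/

/-- One step of the midpoint divide-and-conquer: an interval of length `> 1` is
split at its midpoint, intervals of length `≤ 1` are kept unchanged. -/
def dcStep : ℕ × ℕ → Finset (ℕ × ℕ) := fun p =>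
  if p.2 - p.1 ≤ 1 then {p}
  else {(p.1, (p.1 + p.2) / 2), ((p.1 + p.2) / 2, p.2)}

/-- `dcLevels m h` is the set of subproblem intervals at recursion level `h`
of the midpoint divide-and-conquer on `[0, m]`. -/
def dcLevels (m : ℕ) : ℕ → Finset (ℕ × ℕ)
  | 0 => {(0, m)}
  | h + 1 => (dcLevels m h).biUnion dcStep

/-- The pieces of a nondegenerate interval are nondegenerate subintervals of it. -/
lemma dcStep_subinterval {p q : ℕ × ℕ} (hp : p.1 < p.2) (hq : q ∈ dcStep p) :
    p.1 ≤ q.1 ∧ q.1 < q.2 ∧ q.2 ≤ p.2 := by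
  unfold dcStep at hq
  split_ifs at hq
  · simp only [Finset.mem_singleton] at hq
    subst hq
    omega
  · simp only [Finset.mem_insert, Finset.mem_singleton] at hq
    rcases hq with rfl | rfl <;> dsimp only <;> omega

lemma dcStep_eq_or_disjoint {p q r : ℕ × ℕ} (hq : q ∈ dcStep p) (hr : r ∈ dcStep p) :
    q = r ∨ q.2 ≤ r.1 ∨ r.2 ≤ q.1 := by
  unfold dcStep at hq hr
  split_ifs at hq hr
  · simp only [Finset.mem_singleton] at hq hr
    exact Or.inl (hq.trans hr.symm)
  · simp only [Finset.mem_insert, Finset.mem_singleton] at hq hr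
    rcases hq with rfl | rfl <;> rcases hr with rfl | rfl <;> simp

lemma dcLevels_nondegenerate {m : ℕ} (hm : 1 ≤ m) (h : ℕ) :
    ∀ p ∈ dcLevels m h, p.1 < p.2 := by
  induction h with
  | zero =>
    intro p hp
    simp only [dcLevels, Finset.mem_singleton] at hp
    subst hp
    exact hm
  | succ h ih =>
    intro q hq
    simp only [dcLevels, Finset.mem_biUnion] at hq
    obtain ⟨p, hp, hq⟩ := hq
    exact (dcStep_subinterval (ih p hp) hq).2.1

/-- Distinct intervals of one level have disjoint interiors. -/
lemma dcLevels_eq_or_disjoint {m : ℕ} (hm : 1 ≤ m) (h : ℕ) :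
    ∀ p ∈ dcLevels m h, ∀ q ∈ dcLevels m h, p = q ∨ p.2 ≤ q.1 ∨ q.2 ≤ p.1 := by
  induction h with
  | zero =>
    intro p hp q hq
    simp only [dcLevels, Finset.mem_singleton] at hp hq
    exact Or.inl (hp.trans hq.symm)
  | succ h ih =>
    intro p' hp' q' hq'
    simp only [dcLevels, Finset.mem_biUnion] at hp' hq'
    obtain ⟨p, hp, hp'⟩ := hp'
    obtain ⟨q, hq, hq'⟩ := hq'
    have hpp := dcStep_subinterval (dcLevels_nondegenerate hm h p hp) hp'
    have hqq := dcStep_subinterval (dcLevels_nondegenerate hm h q hq) hq'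
    rcases ih p hp q hq with rfl | hd | hd
    · exact dcStep_eq_or_disjoint hp' hq'
    · right; left; omega
    · right; right; omega

/-- At each recursion level, at most `2` subproblem intervals partially
intersect a fixed interval `[a, b]` (i.e. intersect it without being
contained in it). -/
theorem dc_partial_intersections_le_two (m : ℕ) (hm : 1 ≤ m)
    (a b : ℕ) (hab : a ≤ b) (hbm : b ≤ m) (h : ℕ) :
    ((dcLevels m h).filter fun p =>
      (p.1 ≤ b ∧ a ≤ p.2) ∧ ¬(a ≤ p.1 ∧ p.2 ≤ b)).card ≤ 2 := by
  have hA : ((dcLevels m h).filter fun p => p.1 < a ∧ a ≤ p.2).card ≤ 1 := by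
    rw [Finset.card_le_one]
    intro p hp q hq
    rw [Finset.mem_filter] at hp hq
    rcases dcLevels_eq_or_disjoint hm h p hp.1 q hq.1 with hd | hd | hd
    · exact hd
    · omega
    · omega
  have hB : ((dcLevels m h).filter fun p => p.1 ≤ b ∧ b < p.2).card ≤ 1 := by
    rw [Finset.card_le_one]
    intro p hp q hq
    rw [Finset.mem_filter] at hp hq
    rcases dcLevels_eq_or_disjoint hm h p hp.1 q hq.1 with hd | hd | hd
    · exact hd
    · omega
    · omega
  refine (Finset.card_le_card (t := ((dcLevels m h).filter fun p => p.1 < a ∧ a ≤ p.2) ∪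
    ((dcLevels m h).filter fun p => p.1 ≤ b ∧ b < p.2)) ?_).trans
    ((Finset.card_union_le _ _).trans (Nat.add_le_add hA hB))
  intro p hp
  rw [Finset.mem_filter] at hp
  rw [Finset.mem_union, Finset.mem_filter, Finset.mem_filter]
  obtain ⟨hp, hmeet, hnot⟩ := hp
  by_cases hpa : p.1 < a
  · exact Or.inl ⟨hp, hpa, hmeet.2⟩
  · exact Or.inr ⟨hp, hmeet.1, by omega⟩
end

section
/- Let V be a type, w : V → V → ℝ≥0∞ a weight function, and W ⊆ V a set of vertices such that every edge ingoing to W is absent: w(x,y) = ∞ whenever y ∈ W (for all x ∈ V). Then for every r ∈ W and u ∉ W, the distance from r to u equals the distance computed using only walks that avoid W except at their first vertex: d_w(r,u) equals the infimum of weights of walks from r to u in which no vertex other than the first lies in W. (This is the fact, used in the base case of the query-correctness proof (Lemma 4.5), that distances from a root r on the face are unchanged when the other face vertices are removed, given that no finite-weight edge enters the face.) -/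
/-! A walk with a non-initial vertex in `W` has infinite weight, since the edge into that vertex
is absent (`walkWeight_eq_top_of_mem_tail`). Discarding such walks does not change the infimum
defining the distance. -/

open scoped ENNReal

/-- A walk that enters `W` after its first vertex uses an absent edge. -/
lemma walkWeight_eq_top_of_mem_tail {V : Type*} {w : V → V → ℝ≥0∞} {W : Set V}
    (hW : ∀ x y : V, y ∈ W → w x y = ∞) {z : V} (hz : z ∈ W) :
    ∀ p : List V, z ∈ p.tail → walkWeight w p = ∞
  | [], h => by simp at h
  | [_], h => by simp at h
  | a :: b :: l, h => by
    have hcons : walkWeight w (a :: b :: l) = w a b + walkWeight w (b :: l) := by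
      simp [walkWeight]
    rw [hcons]
    rcases List.mem_cons.1 h with rfl | h
    · rw [hW a z hz, top_add]
    · rw [walkWeight_eq_top_of_mem_tail hW hz (b :: l) h, add_top]

/-- If every edge ingoing to `W` is absent, then for `r ∈ W` and `u ∉ W` the
distance from `r` to `u` equals the infimum over walks from `r` to `u` in
which no vertex other than the first lies in `W`. -/
theorem dist_avoiding_set_with_no_ingoing_edges {V : Type*} (w : V → V → ℝ≥0∞)
    (W : Set V) (hW : ∀ x y : V, y ∈ W → w x y = ∞)
    (r : V) (hr : r ∈ W) (u : V) (hu : u ∉ W) :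
    wDist w r u =
      ⨅ (p : List V) (_ : IsWalk p r u ∧ ∀ z ∈ p.tail, z ∉ W), walkWeight w p := by
  refine le_antisymm (le_iInf₂ fun p hp => iInf₂_le p hp.1) (le_iInf₂ fun p hp => ?_)
  by_cases h : ∀ z ∈ p.tail, z ∉ W
  · exact iInf₂_le p ⟨hp, h⟩
  · push Not at h
    obtain ⟨z, hzp, hz⟩ := h
    rw [walkWeight_eq_top_of_mem_tail hW hz p hzp]
    exact le_top
end
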